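/- arXiv:1801.03237 — 9 statements merged into one kernel-verified Lean document; each statement's English description precedes it below -/
import Mathlib

section
/- For every initial state x₀ ∈ X, the value function produced by the backward dynamic programming recursion equals the optimal cost over all policies: J₀(x₀) = ⨅_{π} V^π₀(x₀), where the infimum is over all policies π. -/
open MeasureTheory
open scoped ENNReal

/-- For every initial state `x₀`, the value function produced by the
backward dynamic programming recursion equals the optimal cost over all policies:
`J 0 x₀ = ⨅ π, V π 0 x₀`. -/
theorem dp_value_eq_inf_policy_cost
    {X U W : Type*} [MeasurableSpace X] [MeasurableSpace U] [MeasurableSpace W]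
    [Nonempty U]
    (N : ℕ) (hN : 1 ≤ N)
    (μ : ℕ → Measure W) (hμ : ∀ k < N, IsProbabilityMeasure (μ k))
    (f : ℕ → X → U → W → X)
    (g : ℕ → X → U → W → ℝ≥0∞)
    (gN : X → ℝ≥0∞)
    (J : ℕ → X → ℝ≥0∞)
    (hJN : ∀ x, J N x = gN x)
    (hJ : ∀ k < N, ∀ x, J k x = ⨅ u : U, ∫⁻ w, (g k x u w + J (k + 1) (f k x u w)) ∂(μ k))
    (V : (ℕ → X → U) → ℕ → X → ℝ≥0∞)
    (hVN : ∀ π : ℕ → X → U, ∀ x, V π N x = gN x)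
    (hV : ∀ π : ℕ → X → U, ∀ k < N, ∀ x,
      V π k x = ∫⁻ w, (g k x (π k x) w + V π (k + 1) (f k x (π k x) w)) ∂(μ k))
    (hmeasJ : ∀ k < N, ∀ (x : X) (u : U),
      Measurable fun w => g k x u w + J (k + 1) (f k x u w))
    (hmeasV : ∀ π : ℕ → X → U, ∀ k < N, ∀ (x : X) (u : U),
      Measurable fun w => g k x u w + V π (k + 1) (f k x u w)) :
    ∀ x₀ : X, J 0 x₀ = ⨅ π : ℕ → X → U, V π 0 x₀ := by
  intro x₀
  apply le_antisymm
  · refine le_iInf fun π => ?_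
    have key : ∀ n k : ℕ, k + n = N → ∀ x, J k x ≤ V π k x := by
      intro n
      induction n with
      | zero =>
        intro k hk x
        obtain rfl : k = N := by omega
        rw [hJN, hVN]
      | succ n ih =>
        intro k hk x
        have hkN : k < N := by omega
        rw [hJ k hkN, hV π k hkN]
        refine (iInf_le _ (π k x)).trans (lintegral_mono fun w => ?_)
        exact add_le_add le_rfl (ih (k + 1) (by omega) _)
    exact key N 0 (by omega) x₀
  · apply ENNReal.le_of_forall_pos_le_add
    intro ε hε _
    have hN0 : (N : ℝ≥0∞) ≠ 0 := by
      simp only [ne_eq, Nat.cast_eq_zero]; omega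
    have hNt : (N : ℝ≥0∞) ≠ ⊤ := ENNReal.natCast_ne_top N
    set δ : ℝ≥0∞ := (ε : ℝ≥0∞) / N with hδ
    have hδ0 : δ ≠ 0 := by
      rw [hδ]
      exact ENNReal.div_ne_zero.2 ⟨by exact_mod_cast hε.ne', hNt⟩
    have hex : ∀ (k : ℕ) (x : X), ∃ u : U, k < N →
        ∫⁻ w, (g k x u w + J (k + 1) (f k x u w)) ∂(μ k) ≤ J k x + δ := by
      intro k x
      by_cases hk : k < N
      · by_cases ht : J k x = ⊤
        · obtain ⟨u⟩ := ‹Nonempty U›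
          exact ⟨u, fun _ => by simp [ht]⟩
        · have hlt : J k x < J k x + δ := ENNReal.lt_add_right ht hδ0
          have h2 := hlt
          nth_rewrite 1 [hJ k hk x] at h2
          obtain ⟨u, hu⟩ := iInf_lt_iff.1 h2
          exact ⟨u, fun _ => hu.le⟩
      · obtain ⟨u⟩ := ‹Nonempty U›
        exact ⟨u, fun h => absurd h hk⟩
    choose π hπ using hex
    have key : ∀ n k : ℕ, k + n = N → ∀ x, V π k x ≤ J k x + n * δ := by
      intro n
      induction n with
      | zero =>
        intro k hk x
        obtain rfl : k = N := by omega
        simp [hJN, hVN]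
      | succ n ih =>
        intro k hk x
        have hkN : k < N := by omega
        have := hμ k hkN
        rw [hV π k hkN]
        calc ∫⁻ w, (g k x (π k x) w + V π (k + 1) (f k x (π k x) w)) ∂(μ k)
            ≤ ∫⁻ w, ((g k x (π k x) w + J (k + 1) (f k x (π k x) w)) + n * δ) ∂(μ k) := by
              refine lintegral_mono fun w => ?_
              rw [add_assoc]
              exact add_le_add le_rfl (ih (k + 1) (by omega) _)
          _ = ∫⁻ w, (g k x (π k x) w + J (k + 1) (f k x (π k x) w)) ∂(μ k) + n * δ := by
              rw [lintegral_add_right _ measurable_const]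
              simp
          _ ≤ (J k x + δ) + n * δ := add_le_add (hπ k x hkN) le_rfl
          _ = J k x + ((n + 1 : ℕ) : ℝ≥0∞) * δ := by
              push_cast
              ring
    refine (iInf_le _ π).trans ((key N 0 (by omega) x₀).trans ?_)
    rw [hδ, ENNReal.mul_div_cancel hN0 hNt]
end

section
/- If (φ, χ, ψ) is a symmetry of the system, then the value functions are invariant: J_k(φ(x)) = J_k(x) for all k = 0,…,N and all x ∈ X. -/
open MeasureTheory
open scoped ENNReal

/-- If `(φ, χ, ψ)` is a symmetry of the system, then the value
functions are invariant: `J k (φ x) = J k x` for all `k = 0, …, N` and all `x`. -/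
theorem value_function_invariant_under_symmetry
    {X U W : Type*} [MeasurableSpace X] [MeasurableSpace U] [MeasurableSpace W]
    [Nonempty U]
    (N : ℕ) (hN : 1 ≤ N)
    (μ : ℕ → Measure W) (hμ : ∀ k < N, IsProbabilityMeasure (μ k))
    (f : ℕ → X → U → W → X)
    (g : ℕ → X → U → W → ℝ≥0∞)
    (gN : X → ℝ≥0∞)
    (J : ℕ → X → ℝ≥0∞)
    (hJN : ∀ x, J N x = gN x)
    (hJ : ∀ k < N, ∀ x, J k x = ⨅ u : U, ∫⁻ w, (g k x u w + J (k + 1) (f k x u w)) ∂(μ k))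
    (φ : X → X) (χ : U → U) (ψ : W → W)
    (hφ : Function.Bijective φ) (hχ : Function.Bijective χ) (hψ : Function.Bijective ψ)
    (hψmeas : Measurable ψ)
    (hf : ∀ k < N, ∀ (x : X) (u : U) (w : W), φ (f k x u w) = f k (φ x) (χ u) (ψ w))
    (hg : ∀ k < N, ∀ (x : X) (u : U) (w : W), g k (φ x) (χ u) (ψ w) = g k x u w)
    (hgN : ∀ x, gN (φ x) = gN x)
    (hmap : ∀ k < N, Measure.map ψ (μ k) = μ k)
    (hmeasJ : ∀ k < N, ∀ (x : X) (u : U),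
      Measurable fun w => g k x u w + J (k + 1) (f k x u w)) :
    ∀ k ≤ N, ∀ x : X, J k (φ x) = J k x := by
  intro k hk
  induction hk using Nat.decreasingInduction with
  | self => intro x; rw [hJN, hJN, hgN]
  | of_succ k hk ih =>
    intro x
    rw [hJ k hk, hJ k hk, ← hχ.surjective.iInf_comp]
    refine iInf_congr fun u => ?_
    have h := lintegral_map (μ := μ k) (hmeasJ k hk (φ x) (χ u)) hψmeas
    rw [hmap k hk] at h
    rw [h]
    refine lintegral_congr fun w => ?_
    rw [hg k hk, ← hf k hk, ih]
end

section
/- Symmetry of optimal policies: let (φ, χ, ψ) be a symmetry of the system and π = (μ^π_0,…,μ^π_{N−1}) a policy. Define the conjugated policy π̃ by μ^{π̃}_k = χ ∘ μ^π_k ∘ φ⁻¹. Then the cost-to-go functions satisfy V^{π̃}_k(φ(x)) = V^π_k(x) for all k = 0,…,N and x ∈ X. In particular, if V^π_k = J_k for all k (π is optimal), then V^{π̃}_k = J_k for all k (π̃ is optimal). -/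
open MeasureTheory
open scoped ENNReal

/-- Symmetry of optimal policies: if `(φ, χ, ψ)` is a symmetry of the
system and `π` a policy, then the conjugated policy `π̃` with `μ^{π̃}_k = χ ∘ μ^π_k ∘ φ⁻¹`
satisfies `V^{π̃}_k (φ x) = V^π_k x` for all `k = 0, …, N` and `x`.  In particular, if
`π` is optimal (`V^π_k = J_k` for all `k`), then so is `π̃`. -/
theorem conjugated_policy_cost_and_optimality
    {X U W : Type*} [MeasurableSpace X] [MeasurableSpace U] [MeasurableSpace W]
    [Nonempty U]
    (N : ℕ) (hN : 1 ≤ N)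
    (μ : ℕ → Measure W) (hμ : ∀ k < N, IsProbabilityMeasure (μ k))
    (f : ℕ → X → U → W → X)
    (g : ℕ → X → U → W → ℝ≥0∞)
    (gN : X → ℝ≥0∞)
    (J : ℕ → X → ℝ≥0∞)
    (hJN : ∀ x, J N x = gN x)
    (hJ : ∀ k < N, ∀ x, J k x = ⨅ u : U, ∫⁻ w, (g k x u w + J (k + 1) (f k x u w)) ∂(μ k))
    (V : (ℕ → X → U) → ℕ → X → ℝ≥0∞)
    (hVN : ∀ π : ℕ → X → U, ∀ x, V π N x = gN x)
    (hV : ∀ π : ℕ → X → U, ∀ k < N, ∀ x,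
      V π k x = ∫⁻ w, (g k x (π k x) w + V π (k + 1) (f k x (π k x) w)) ∂(μ k))
    (φ : X → X) (χ : U → U) (ψ : W → W)
    (hφ : Function.Bijective φ) (hχ : Function.Bijective χ) (hψ : Function.Bijective ψ)
    (hψmeas : Measurable ψ)
    (hf : ∀ k < N, ∀ (x : X) (u : U) (w : W), φ (f k x u w) = f k (φ x) (χ u) (ψ w))
    (hg : ∀ k < N, ∀ (x : X) (u : U) (w : W), g k (φ x) (χ u) (ψ w) = g k x u w)
    (hgN : ∀ x, gN (φ x) = gN x)
    (hmap : ∀ k < N, Measure.map ψ (μ k) = μ k)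
    (π : ℕ → X → U)
    (πt : ℕ → X → U)
    (hπt : ∀ k x, πt k x = χ (π k ((Equiv.ofBijective φ hφ).symm x)))
    (hmeasπ : ∀ k < N, ∀ (x : X) (u : U),
      Measurable fun w => g k x u w + V π (k + 1) (f k x u w))
    (hmeasπt : ∀ k < N, ∀ (x : X) (u : U),
      Measurable fun w => g k x u w + V πt (k + 1) (f k x u w)) :
    (∀ k ≤ N, ∀ x : X, V πt k (φ x) = V π k x) ∧
      ((∀ k ≤ N, ∀ x : X, V π k x = J k x) → ∀ k ≤ N, ∀ x : X, V πt k x = J k x) := by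
  have key : ∀ k < N, ∀ F : W → ℝ≥0∞, Measurable F →
      ∫⁻ w, F w ∂(μ k) = ∫⁻ w, F (ψ w) ∂(μ k) := by
    intro k hk F hF
    conv_lhs => rw [← hmap k hk]
    exact lintegral_map hF hψmeas
  have h1 : ∀ k ≤ N, ∀ x : X, V πt k (φ x) = V π k x := by
    intro k hk
    induction hk using Nat.decreasingInduction with
    | self => intro x; rw [hVN, hVN, hgN]
    | @of_succ k hk ih =>
      intro x
      have hs : (Equiv.ofBijective φ hφ).symm (φ x) = x :=
        (Equiv.ofBijective φ hφ).symm_apply_apply x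
      have hp : πt k (φ x) = χ (π k x) := by rw [hπt, hs]
      rw [hV πt k hk, hV π k hk, hp, key k hk _ (hmeasπt k hk (φ x) (χ (π k x)))]
      refine lintegral_congr fun w => ?_
      rw [hg k hk, ← hf k hk, ih]
  refine ⟨h1, fun hopt => ?_⟩
  have h2 : ∀ k ≤ N, ∀ x : X, J k (φ x) = J k x := by
    intro k hk
    induction hk using Nat.decreasingInduction with
    | self => intro x; rw [hJN, hJN, hgN]
    | @of_succ k hk ih =>
      intro x
      rw [hJ k hk, hJ k hk, ← hχ.surjective.iInf_comp]
      refine iInf_congr fun u => ?_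
      have hm : Measurable fun w => g k (φ x) (χ u) w + J (k + 1) (f k (φ x) (χ u) w) := by
        have := hmeasπ k hk (φ x) (χ u)
        simpa only [hopt (k + 1) hk] using this
      rw [key k hk _ hm]
      refine lintegral_congr fun w => ?_
      rw [hg k hk, ← hf k hk, ih]
  intro k hk x
  obtain ⟨y, rfl⟩ := hφ.surjective x
  rw [h1 k hk, h2 k hk, hopt k hk]
end

section
/- Reconstruction of the value function from reduced coordinates: under the group-symmetry and moving-frame assumptions, for every k = 0,…,N and every x ∈ X, J_k(x) = J_k(s(ρ(x))) = J̄_k(ρ(x)), where J̄_k := J_k ∘ s. -/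
open MeasureTheory
open scoped ENNReal

/-- Reconstruction of the value function from reduced coordinates:
under the group-symmetry and moving-frame assumptions, for every `k = 0, …, N` and
every `x`, `J k x = J k (s (ρ x)) = J̄ k (ρ x)` where `J̄ k := J k ∘ s`. -/
theorem value_function_from_reduced_coordinates
    {X U W : Type*} [MeasurableSpace X] [MeasurableSpace U] [MeasurableSpace W]
    [Nonempty U]
    (N : ℕ) (hN : 1 ≤ N)
    (μ : ℕ → Measure W) (hμ : ∀ k < N, IsProbabilityMeasure (μ k))
    (f : ℕ → X → U → W → X)
    (g : ℕ → X → U → W → ℝ≥0∞)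
    (gN : X → ℝ≥0∞)
    (J : ℕ → X → ℝ≥0∞)
    (hJN : ∀ x, J N x = gN x)
    (hJ : ∀ k < N, ∀ x, J k x = ⨅ u : U, ∫⁻ w, (g k x u w + J (k + 1) (f k x u w)) ∂(μ k))
    -- group symmetry
    (G : Type*) [Group G]
    (φ : G → X → X) (χ : G → U → U) (ψ : G → W → W)
    (hχbij : ∀ α : G, Function.Bijective (χ α))
    (hψbij : ∀ α : G, Function.Bijective (ψ α))
    (hψmeas : ∀ α : G, Measurable (ψ α))
    (hφe : φ 1 = id) (hφmul : ∀ α β : G, φ (α * β) = φ α ∘ φ β)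
    (hχe : χ 1 = id) (hχmul : ∀ α β : G, χ (α * β) = χ α ∘ χ β)
    (hψe : ψ 1 = id) (hψmul : ∀ α β : G, ψ (α * β) = ψ α ∘ ψ β)
    (hf : ∀ α : G, ∀ k < N, ∀ (x : X) (u : U) (w : W),
      φ α (f k x u w) = f k (φ α x) (χ α u) (ψ α w))
    (hg : ∀ α : G, ∀ k < N, ∀ (x : X) (u : U) (w : W),
      g k (φ α x) (χ α u) (ψ α w) = g k x u w)
    (hgN : ∀ (α : G) (x : X), gN (φ α x) = gN x)
    (hmap : ∀ α : G, ∀ k < N, Measure.map (ψ α) (μ k) = μ k)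
    -- moving frame
    (Y : Type*) (ρ : X → Y)
    (hρ : ∀ (α : G) (x : X), ρ (φ α x) = ρ x)
    (s : Y → X) (γ : X → G)
    (hframe : ∀ x : X, φ (γ x) x = s (ρ x))
    -- measurability
    (hmeasJ : ∀ k < N, ∀ (x : X) (u : U),
      Measurable fun w => g k x u w + J (k + 1) (f k x u w)) :
    ∀ k ≤ N, ∀ x : X, J k x = J k (s (ρ x)) ∧ J k x = (J k ∘ s) (ρ x) := by
  have key : ∀ k ≤ N, ∀ (α : G) (x : X), J k (φ α x) = J k x := by
    intro k hk
    induction hk using Nat.decreasingInduction with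
    | self =>
      intro α x
      rw [hJN, hJN, hgN]
    | of_succ k hk ih =>
      intro α x
      rw [hJ k hk, hJ k hk, ← (hχbij α).surjective.iInf_comp]
      refine iInf_congr fun u => ?_
      conv_lhs => rw [← hmap α k hk]
      rw [lintegral_map (hmeasJ k hk _ _) (hψmeas α)]
      refine lintegral_congr fun w => ?_
      rw [hg α k hk, ← hf α k hk, ih]
  intro k hk x
  have h : J k x = J k (s (ρ x)) := by rw [← hframe x, key k hk]
  exact ⟨h, h⟩
end

section
/- Dynamic programming in reduced coordinates: under the group-symmetry and moving-frame assumptions, the reduced value functions J̄_k := J_k ∘ s satisfy, for every k < N and every y in the range of ρ, the recursion J̄_k(y) = ⨅_{u ∈ U} ∫⁻_W (g_k(s(y),u,w) + J̄_{k+1}(ρ(f_k(s(y),u,w)))) dμ_k(w), together with J̄_N = g_N ∘ s. -/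
open MeasureTheory
open scoped ENNReal

/-- Dynamic programming in reduced coordinates: under the
group-symmetry and moving-frame assumptions, the reduced value functions
`J̄ k := J k ∘ s` satisfy the backward recursion on the range of `ρ`, together with
`J̄ N = gN ∘ s`. -/
theorem dynamic_programming_in_reduced_coordinates
    {X U W : Type*} [MeasurableSpace X] [MeasurableSpace U] [MeasurableSpace W]
    [Nonempty U]
    (N : ℕ) (hN : 1 ≤ N)
    (μ : ℕ → Measure W) (hμ : ∀ k < N, IsProbabilityMeasure (μ k))
    (f : ℕ → X → U → W → X)
    (g : ℕ → X → U → W → ℝ≥0∞)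
    (gN : X → ℝ≥0∞)
    (J : ℕ → X → ℝ≥0∞)
    (hJN : ∀ x, J N x = gN x)
    (hJ : ∀ k < N, ∀ x, J k x = ⨅ u : U, ∫⁻ w, (g k x u w + J (k + 1) (f k x u w)) ∂(μ k))
    -- group symmetry
    (G : Type*) [Group G]
    (φ : G → X → X) (χ : G → U → U) (ψ : G → W → W)
    (hχbij : ∀ α : G, Function.Bijective (χ α))
    (hψbij : ∀ α : G, Function.Bijective (ψ α))
    (hψmeas : ∀ α : G, Measurable (ψ α))
    (hφe : φ 1 = id) (hφmul : ∀ α β : G, φ (α * β) = φ α ∘ φ β)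
    (hχe : χ 1 = id) (hχmul : ∀ α β : G, χ (α * β) = χ α ∘ χ β)
    (hψe : ψ 1 = id) (hψmul : ∀ α β : G, ψ (α * β) = ψ α ∘ ψ β)
    (hf : ∀ α : G, ∀ k < N, ∀ (x : X) (u : U) (w : W),
      φ α (f k x u w) = f k (φ α x) (χ α u) (ψ α w))
    (hg : ∀ α : G, ∀ k < N, ∀ (x : X) (u : U) (w : W),
      g k (φ α x) (χ α u) (ψ α w) = g k x u w)
    (hgN : ∀ (α : G) (x : X), gN (φ α x) = gN x)
    (hmap : ∀ α : G, ∀ k < N, Measure.map (ψ α) (μ k) = μ k)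
    -- moving frame
    (Y : Type*) (ρ : X → Y)
    (hρ : ∀ (α : G) (x : X), ρ (φ α x) = ρ x)
    (s : Y → X) (γ : X → G)
    (hframe : ∀ x : X, φ (γ x) x = s (ρ x))
    -- measurability
    (hmeasJ : ∀ k < N, ∀ (x : X) (u : U),
      Measurable fun w => g k x u w + J (k + 1) (f k x u w)) :
    (∀ y : Y, (J N ∘ s) y = (gN ∘ s) y) ∧
      ∀ k < N, ∀ y ∈ Set.range ρ,
        (J k ∘ s) y
          = ⨅ u : U, ∫⁻ w,
              (g k (s y) u w + (J (k + 1) ∘ s) (ρ (f k (s y) u w))) ∂(μ k) := by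
  have inv : ∀ k ≤ N, ∀ (α : G) (x : X), J k (φ α x) = J k x := by
    intro k hk
    induction hk using Nat.decreasingInduction with
    | self => intro α x; rw [hJN, hJN, hgN]
    | of_succ k hk ih =>
      intro α x
      rw [hJ k hk, hJ k hk, ← (hχbij α).surjective.iInf_comp]
      refine iInf_congr fun u => ?_
      conv_lhs => rw [← hmap α k hk]
      rw [lintegral_map (hmeasJ k hk _ _) (hψmeas α)]
      refine lintegral_congr fun w => ?_
      rw [hg α k hk, ← hf α k hk, ih]
  refine ⟨fun y => hJN _, fun k hk y _ => ?_⟩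
  have h : ∀ x, J (k + 1) (s (ρ x)) = J (k + 1) x := fun x => by
    rw [← hframe, inv (k + 1) hk]
  simp only [Function.comp_apply, h]
  exact hJ k hk _
end

section
/- Lifting of optimal reduced policies: under the group-symmetry and moving-frame assumptions, let μ̄_k : Y → U for k < N, and suppose that for every k < N and every x in the image of s ∘ ρ, the control μ̄_k(ρ(x)) attains the dynamic-programming infimum at x, i.e. ∫⁻_W (g_k(x, μ̄_k(ρ(x)), w) + J_{k+1}(f_k(x, μ̄_k(ρ(x)), w))) dμ_k(w) = J_k(x). Then the lifted policy π defined by μ^π_k(x) := χ_{γ(x)⁻¹}(μ̄_k(ρ(x))) is optimal: its cost-to-go functions satisfy V^π_k(x) = J_k(x) for all k = 0,…,N and all x ∈ X. -/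
open MeasureTheory
open scoped ENNReal

/-- Lifting of optimal reduced policies: under the group-symmetry and
moving-frame assumptions, if the reduced controls `μ̄ k (ρ x)` attain the
dynamic-programming infimum at every point `x` of the image of `s ∘ ρ`, then the lifted
policy `μ^π_k (x) := χ_{γ(x)⁻¹} (μ̄ k (ρ x))` is optimal: `V^π_k = J_k` everywhere. -/
theorem lifted_reduced_policy_is_optimal
    {X U W : Type*} [MeasurableSpace X] [MeasurableSpace U] [MeasurableSpace W]
    [Nonempty U]
    (N : ℕ) (hN : 1 ≤ N)
    (μ : ℕ → Measure W) (hμ : ∀ k < N, IsProbabilityMeasure (μ k))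
    (f : ℕ → X → U → W → X)
    (g : ℕ → X → U → W → ℝ≥0∞)
    (gN : X → ℝ≥0∞)
    (J : ℕ → X → ℝ≥0∞)
    (hJN : ∀ x, J N x = gN x)
    (hJ : ∀ k < N, ∀ x, J k x = ⨅ u : U, ∫⁻ w, (g k x u w + J (k + 1) (f k x u w)) ∂(μ k))
    -- group symmetry
    (G : Type*) [Group G]
    (φ : G → X → X) (χ : G → U → U) (ψ : G → W → W)
    (hχbij : ∀ α : G, Function.Bijective (χ α))
    (hψbij : ∀ α : G, Function.Bijective (ψ α))
    (hψmeas : ∀ α : G, Measurable (ψ α))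
    (hφe : φ 1 = id) (hφmul : ∀ α β : G, φ (α * β) = φ α ∘ φ β)
    (hχe : χ 1 = id) (hχmul : ∀ α β : G, χ (α * β) = χ α ∘ χ β)
    (hψe : ψ 1 = id) (hψmul : ∀ α β : G, ψ (α * β) = ψ α ∘ ψ β)
    (hf : ∀ α : G, ∀ k < N, ∀ (x : X) (u : U) (w : W),
      φ α (f k x u w) = f k (φ α x) (χ α u) (ψ α w))
    (hg : ∀ α : G, ∀ k < N, ∀ (x : X) (u : U) (w : W),
      g k (φ α x) (χ α u) (ψ α w) = g k x u w)
    (hgN : ∀ (α : G) (x : X), gN (φ α x) = gN x)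
    (hmap : ∀ α : G, ∀ k < N, Measure.map (ψ α) (μ k) = μ k)
    -- moving frame
    (Y : Type*) (ρ : X → Y)
    (hρ : ∀ (α : G) (x : X), ρ (φ α x) = ρ x)
    (s : Y → X) (γ : X → G)
    (hframe : ∀ x : X, φ (γ x) x = s (ρ x))
    -- policies and their cost-to-go functions
    (V : (ℕ → X → U) → ℕ → X → ℝ≥0∞)
    (hVN : ∀ π : ℕ → X → U, ∀ x, V π N x = gN x)
    (hV : ∀ π : ℕ → X → U, ∀ k < N, ∀ x,
      V π k x = ∫⁻ w, (g k x (π k x) w + V π (k + 1) (f k x (π k x) w)) ∂(μ k))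
    -- an optimal reduced policy
    (μbar : ℕ → Y → U)
    (hopt : ∀ k < N, ∀ x ∈ Set.range (s ∘ ρ),
      ∫⁻ w, (g k x (μbar k (ρ x)) w + J (k + 1) (f k x (μbar k (ρ x)) w)) ∂(μ k) = J k x)
    -- the lifted policy
    (π : ℕ → X → U)
    (hπ : ∀ k x, π k x = χ (γ x)⁻¹ (μbar k (ρ x)))
    -- measurability
    (hmeasJ : ∀ k < N, ∀ (x : X) (u : U),
      Measurable fun w => g k x u w + J (k + 1) (f k x u w))
    (hmeasV : ∀ k < N, ∀ (x : X) (u : U),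
      Measurable fun w => g k x u w + V π (k + 1) (f k x u w)) :
    ∀ k ≤ N, ∀ x : X, V π k x = J k x := by
  have hQ : ∀ k < N, (∀ (α : G) (x : X), J (k + 1) (φ α x) = J (k + 1) x) →
      ∀ (α : G) (x : X) (u : U),
      ∫⁻ w, (g k (φ α x) (χ α u) w + J (k + 1) (f k (φ α x) (χ α u) w)) ∂(μ k)
        = ∫⁻ w, (g k x u w + J (k + 1) (f k x u w)) ∂(μ k) := by
    intro k hk hinv α x u
    conv_lhs => rw [← hmap α k hk]
    rw [lintegral_map (hmeasJ k hk _ _) (hψmeas α)]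
    refine lintegral_congr fun w => ?_
    rw [hg α k hk, ← hf α k hk, hinv]
  have hstep : ∀ k < N, (∀ (α : G) (x : X), J (k + 1) (φ α x) = J (k + 1) x) →
      ∀ (α : G) (x : X), J k (φ α x) = J k x := by
    intro k hk hinv α x
    rw [hJ k hk, hJ k hk, ← (hχbij α).surjective.iInf_comp]
    exact iInf_congr fun u => hQ k hk hinv α x u
  have key : ∀ d k, k + d = N →
      (∀ (α : G) (x : X), J k (φ α x) = J k x) ∧ ∀ x, V π k x = J k x := by
    intro d
    induction d with
    | zero =>
      intro k hk
      obtain rfl : k = N := by omega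
      exact ⟨fun α x => by rw [hJN, hJN, hgN], fun x => by rw [hVN, hJN]⟩
    | succ d ih =>
      intro k hkd
      have hk : k < N := by omega
      obtain ⟨hinv, hVJ⟩ := ih (k + 1) (by omega)
      have hinv' := hstep k hk hinv
      refine ⟨hinv', fun x => ?_⟩
      have hχ : χ (γ x) (π k x) = μbar k (ρ x) := by
        rw [hπ]
        have := congrFun (hχmul (γ x) (γ x)⁻¹) (μbar k (ρ x))
        rw [mul_inv_cancel, hχe] at this
        exact this.symm
      have h1 := hopt k hk (φ (γ x) x) ⟨x, (hframe x).symm⟩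
      rw [hρ, ← hχ, hQ k hk hinv, hinv'] at h1
      rw [hV π k hk, ← h1]
      exact lintegral_congr fun w => by rw [hVJ]
  intro k hk x
  exact (key (N - k) k (by omega)).2 x
end

section
/- Positive homogeneity of the value function with L¹-regularized controls: let A be an n×n real matrix, B an n×m real matrix, and h : ℝⁿ → [0,∞) a function satisfying h(a·x) = a·h(x) for all a > 0 and x ∈ ℝⁿ, and h(0) = 0. Define value functions J_N(x) = h(x) and J_k(x) = ⨅_{u ∈ ℝᵐ} (h(x) + ‖u‖₁ + J_{k+1}(Ax + Bu)) for k < N, where ‖u‖₁ = Σ_i |u_i|. Then for every c > 0, every k = 0,…,N and every x ∈ ℝⁿ, J_k(c·x) = c·J_k(x). -/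
open Matrix
open scoped ENNReal

/-- Positive homogeneity of the value function with
`L¹`-regularized controls: if `h : ℝⁿ → [0,∞)` satisfies `h (a • x) = a * h x` for all
`a > 0` and `h 0 = 0`, and `J N x = h x`,
`J k x = ⨅ u, (h x + ‖u‖₁ + J (k+1) (A x + B u))`, then `J k (c • x) = c • J k x` for
every `c > 0`, every `k = 0, …, N`, and every `x ∈ ℝⁿ`. -/
theorem l1_regularized_value_function_homogeneous
    (n m : ℕ) (hn : 0 < n) (hm : 0 < m)
    (N : ℕ) (hN : 1 ≤ N)
    (A : Matrix (Fin n) (Fin n) ℝ) (B : Matrix (Fin n) (Fin m) ℝ)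
    (h : (Fin n → ℝ) → ℝ)
    (hh_nonneg : ∀ x, 0 ≤ h x)
    (hh_homog : ∀ a : ℝ, 0 < a → ∀ x : Fin n → ℝ, h (a • x) = a * h x)
    (hh_zero : h 0 = 0)
    (J : ℕ → (Fin n → ℝ) → ℝ≥0∞)
    (hJN : ∀ x : Fin n → ℝ, J N x = ENNReal.ofReal (h x))
    (hJ : ∀ k < N, ∀ x : Fin n → ℝ,
      J k x = ⨅ u : Fin m → ℝ,
        (ENNReal.ofReal (h x + ∑ i, |u i|) + J (k + 1) (A.mulVec x + B.mulVec u))) :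
    ∀ c : ℝ, 0 < c → ∀ k ≤ N, ∀ x : Fin n → ℝ,
      J k (c • x) = ENNReal.ofReal c * J k x := by
  intro c hc k hk
  induction hk using Nat.decreasingInduction with
  | self =>
    intro x
    rw [hJN, hJN, hh_homog c hc, ENNReal.ofReal_mul hc.le]
  | of_succ k hk ih =>
    intro x
    rw [hJ k hk, hJ k hk,
      ENNReal.mul_iInf_of_ne (by simpa using hc) ENNReal.ofReal_ne_top]
    have hs : Function.Surjective (fun u : Fin m → ℝ => c • u) := fun u =>
      ⟨c⁻¹ • u, by simp [smul_smul, hc.ne']⟩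
    rw [← hs.iInf_comp]
    refine iInf_congr fun u => ?_
    have h1 : h (c • x) + ∑ i, |(c • u) i| = c * (h x + ∑ i, |u i|) := by
      rw [hh_homog c hc, mul_add, Finset.mul_sum]
      simp [abs_mul, abs_of_pos hc]
    have h2 : A.mulVec (c • x) + B.mulVec (c • u) = c • (A.mulVec x + B.mulVec u) := by
      rw [Matrix.mulVec_smul, Matrix.mulVec_smul, smul_add]
    rw [h1, h2, ih, ENNReal.ofReal_mul hc.le, mul_add]
end

section
/- Rotational symmetry of the MR fingerprinting model: fix real parameters θ₁, θ₂, γ > 0. For x ∈ ℝ⁶ and a 3×3 real matrix U, define f(x,U) = blockdiag(U,U)·D·x + b, where D is the 6×6 matrix with rows (θ₂,0,0,0,0,0), (0,θ₂,0,0,0,0), (0,0,θ₁,0,0,0), (0,0,0,θ₂,0,0), (0,0,0,0,θ₂,0), (0,0,1,0,0,θ₁), and b = (0,0,1−θ₁,0,0,−1)ᵀ; define g(x) = (1/γ)(x₄² + x₅²). For α ∈ ℝ let R_α be the 3×3 rotation [[cos α, −sin α, 0],[sin α, cos α, 0],[0,0,1]] and let Φ_α = blockdiag(R_α, R_α) acting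 on ℝ⁶. Then for all α ∈ ℝ, x ∈ ℝ⁶ and all 3×3 matrices U: f(Φ_α x, R_α U R_α⁻¹) = Φ_α f(x,U), and g(Φ_α x) = g(x). -/
open Matrix

/-- The 6×6 block-diagonal matrix `blockdiag(U, U)` with two copies of the 3×3 matrix
`U` on the diagonal. -/
def blockDiag2 (U : Matrix (Fin 3) (Fin 3) ℝ) : Matrix (Fin 6) (Fin 6) ℝ :=
  Matrix.reindex finSumFinEquiv finSumFinEquiv (Matrix.fromBlocks U 0 0 U)

/-- The decay matrix `D` of the MR fingerprinting model. -/
def mriD (θ₁ θ₂ : ℝ) : Matrix (Fin 6) (Fin 6) ℝ :=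
  !![θ₂, 0, 0, 0, 0, 0;
     0, θ₂, 0, 0, 0, 0;
     0, 0, θ₁, 0, 0, 0;
     0, 0, 0, θ₂, 0, 0;
     0, 0, 0, 0, θ₂, 0;
     0, 0, 1, 0, 0, θ₁]

/-- The affine offset `b` of the MR fingerprinting model. -/
def mriB (θ₁ : ℝ) : Fin 6 → ℝ := ![0, 0, 1 - θ₁, 0, 0, -1]

/-- The state update `f(x, U) = blockdiag(U, U) · D · x + b` of the MR fingerprinting
model. -/
def mriF (θ₁ θ₂ : ℝ) (x : Fin 6 → ℝ) (U : Matrix (Fin 3) (Fin 3) ℝ) : Fin 6 → ℝ :=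
  (blockDiag2 U * mriD θ₁ θ₂).mulVec x + mriB θ₁

/-- The stage reward `g(x) = (1/γ) (x₄² + x₅²)` of the MR fingerprinting model (using
1-based coordinates as in the paper). -/
noncomputable def mriG (γ : ℝ) (x : Fin 6 → ℝ) : ℝ := 1 / γ * (x 3 ^ 2 + x 4 ^ 2)

/-- The rotation `R_α` about the third axis. -/
noncomputable def rotZ (α : ℝ) : Matrix (Fin 3) (Fin 3) ℝ :=
  !![Real.cos α, -Real.sin α, 0;
     Real.sin α,  Real.cos α, 0;
     0, 0, 1]

/-- The block rotation `Φ_α = blockdiag(R_α, R_α)` acting on `ℝ⁶`. -/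
noncomputable def mriPhi (α : ℝ) : Matrix (Fin 6) (Fin 6) ℝ := blockDiag2 (rotZ α)

theorem blockDiag2_mul (A B : Matrix (Fin 3) (Fin 3) ℝ) :
    blockDiag2 (A * B) = blockDiag2 A * blockDiag2 B := by
  simp [blockDiag2, Matrix.reindex_apply, Matrix.submatrix_mul_equiv, Matrix.fromBlocks_multiply]

theorem blockDiag2_explicit (U : Matrix (Fin 3) (Fin 3) ℝ) :
    blockDiag2 U =
      !![U 0 0, U 0 1, U 0 2, 0, 0, 0;
         U 1 0, U 1 1, U 1 2, 0, 0, 0;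
         U 2 0, U 2 1, U 2 2, 0, 0, 0;
         0, 0, 0, U 0 0, U 0 1, U 0 2;
         0, 0, 0, U 1 0, U 1 1, U 1 2;
         0, 0, 0, U 2 0, U 2 1, U 2 2] := by
  ext i j
  fin_cases i <;> fin_cases j <;> rfl

theorem mriPhi_explicit (α : ℝ) :
    mriPhi α =
      !![Real.cos α, -Real.sin α, 0, 0, 0, 0;
         Real.sin α, Real.cos α, 0, 0, 0, 0;
         0, 0, 1, 0, 0, 0;
         0, 0, 0, Real.cos α, -Real.sin α, 0;
         0, 0, 0, Real.sin α, Real.cos α, 0;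
         0, 0, 0, 0, 0, 1] := by
  rw [mriPhi, blockDiag2_explicit]
  simp [rotZ]

theorem rotZ_inv_mul (α : ℝ) : (rotZ α)⁻¹ * rotZ α = 1 := by
  apply Matrix.nonsing_inv_mul
  have : (rotZ α).det = 1 := by
    simp [rotZ, Matrix.det_fin_three]
    nlinarith [Real.sin_sq_add_cos_sq α]
  simp [this]

theorem mriD_comm (θ₁ θ₂ α : ℝ) : mriD θ₁ θ₂ * mriPhi α = mriPhi α * mriD θ₁ θ₂ := by
  rw [mriPhi_explicit]
  ext i j
  fin_cases i <;> fin_cases j <;>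
    simp [mriD, Matrix.mul_apply, Fin.sum_univ_six] <;> ring

theorem mriPhi_b (θ₁ α : ℝ) : (mriPhi α).mulVec (mriB θ₁) = mriB θ₁ := by
  rw [mriPhi_explicit]
  ext i
  fin_cases i <;> simp [mriB, Matrix.mulVec, dotProduct, Fin.sum_univ_six]

/-- Rotational symmetry of the MR fingerprinting model: for all
`α ∈ ℝ`, `x ∈ ℝ⁶` and 3×3 matrices `U`,
`f(Φ_α x, R_α U R_α⁻¹) = Φ_α f(x, U)` and `g(Φ_α x) = g(x)`. -/
theorem mri_rotational_symmetry
    (θ₁ θ₂ γ : ℝ) (hγ : 0 < γ) :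
    ∀ (α : ℝ) (x : Fin 6 → ℝ) (U : Matrix (Fin 3) (Fin 3) ℝ),
      mriF θ₁ θ₂ ((mriPhi α).mulVec x) (rotZ α * U * (rotZ α)⁻¹)
          = (mriPhi α).mulVec (mriF θ₁ θ₂ x U) ∧
        mriG γ ((mriPhi α).mulVec x) = mriG γ x := by
  intro α x U
  constructor
  · have hc : blockDiag2 (rotZ α * U * (rotZ α)⁻¹) * mriD θ₁ θ₂ * mriPhi α
        = mriPhi α * (blockDiag2 U * mriD θ₁ θ₂) := by
      rw [Matrix.mul_assoc, mriD_comm, ← Matrix.mul_assoc, mriPhi, ← blockDiag2_mul,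
        Matrix.mul_assoc (rotZ α * U), rotZ_inv_mul, Matrix.mul_one, blockDiag2_mul,
        Matrix.mul_assoc]
    rw [mriF, mriF, Matrix.mulVec_add, mriPhi_b, Matrix.mulVec_mulVec, Matrix.mulVec_mulVec, hc]
  · rw [mriPhi_explicit]
    simp only [mriG]
    congr 1
    simp [Matrix.mulVec, dotProduct, Fin.sum_univ_six]
    linear_combination (x 3 ^ 2 + x 4 ^ 2) * Real.sin_sq_add_cos_sq α
end

section
/- Invariance of the MRI moving-frame coordinates: define ρ : {x ∈ ℝ⁶ : (x₁,x₂) ≠ (0,0)} → ℝ⁵ by ρ(x) = (√(x₁²+x₂²), x₃, (x₂x₄ − x₁x₅)/√(x₁²+x₂²), (x₁x₄ + x₂x₅)/√(x₁²+x₂²), x₆). For α ∈ ℝ let Φ_α be the 6×6 block-diagonal matrix blockdiag(R_α, R_α) where R_α = [[cos α, −sin α, 0],[sin α, cos α, 0],[0,0,1]]. Then for every α ∈ ℝ and every x ∈ ℝ⁶ with (x₁,x₂) ≠ (0,0), the point Φ_α x also satisfies ((Φ_α x)₁,(Φ_α x)₂) ≠ (0,0) and ρ(Φ_α x) = ρ(x).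 -/
open Matrix

/-- The moving-frame invariants `ρ(x)` of the MRI model (in 0-based coordinates:
`ρ(x) = (√(x₁²+x₂²), x₃, (x₂x₄ − x₁x₅)/√(x₁²+x₂²), (x₁x₄ + x₂x₅)/√(x₁²+x₂²), x₆)`). -/
noncomputable def mriRho (x : Fin 6 → ℝ) : Fin 5 → ℝ :=
  ![Real.sqrt (x 0 ^ 2 + x 1 ^ 2),
    x 2,
    (x 1 * x 3 - x 0 * x 4) / Real.sqrt (x 0 ^ 2 + x 1 ^ 2),
    (x 0 * x 3 + x 1 * x 4) / Real.sqrt (x 0 ^ 2 + x 1 ^ 2),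
    x 5]

theorem mriPhi_mulVec (α : ℝ) (x : Fin 6 → ℝ) :
    (mriPhi α).mulVec x =
      ![Real.cos α * x 0 - Real.sin α * x 1, Real.sin α * x 0 + Real.cos α * x 1, x 2,
        Real.cos α * x 3 - Real.sin α * x 4, Real.sin α * x 3 + Real.cos α * x 4, x 5] := by
  have h : mriPhi α =
      !![Real.cos α, -Real.sin α, 0, 0, 0, 0;
         Real.sin α, Real.cos α, 0, 0, 0, 0;
         0, 0, 1, 0, 0, 0;
         0, 0, 0, Real.cos α, -Real.sin α, 0;
         0, 0, 0, Real.sin α, Real.cos α, 0;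
         0, 0, 0, 0, 0, 1] := by
    ext i j
    fin_cases i <;> fin_cases j <;> rfl
  rw [h]
  ext i
  fin_cases i <;> simp [Matrix.mulVec, dotProduct, Fin.sum_univ_succ] <;> first | rfl | (try ring_nf) <;> rfl

/-- Invariance of the MRI moving-frame coordinates: for every
`α ∈ ℝ` and every `x ∈ ℝ⁶` with `(x₁, x₂) ≠ (0, 0)`, the point `Φ_α x` also satisfies
`((Φ_α x)₁, (Φ_α x)₂) ≠ (0, 0)`, and `ρ(Φ_α x) = ρ(x)`. -/
theorem mri_rho_invariant :
    ∀ (α : ℝ) (x : Fin 6 → ℝ), (x 0, x 1) ≠ (0, 0) →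
      (((mriPhi α).mulVec x 0, (mriPhi α).mulVec x 1) ≠ (0, 0) ∧
        mriRho ((mriPhi α).mulVec x) = mriRho x) := by
  intro α x hx
  have hc := Real.sin_sq_add_cos_sq α
  rw [mriPhi_mulVec]
  have e0 : (Real.cos α * x 0 - Real.sin α * x 1) ^ 2 +
      (Real.sin α * x 0 + Real.cos α * x 1) ^ 2 = x 0 ^ 2 + x 1 ^ 2 := by
    linear_combination (x 0 ^ 2 + x 1 ^ 2) * hc
  have e1 : (Real.sin α * x 0 + Real.cos α * x 1) * (Real.cos α * x 3 - Real.sin α * x 4) -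
      (Real.cos α * x 0 - Real.sin α * x 1) * (Real.sin α * x 3 + Real.cos α * x 4) =
      x 1 * x 3 - x 0 * x 4 := by
    linear_combination (x 1 * x 3 - x 0 * x 4) * hc
  have e2 : (Real.cos α * x 0 - Real.sin α * x 1) * (Real.cos α * x 3 - Real.sin α * x 4) +
      (Real.sin α * x 0 + Real.cos α * x 1) * (Real.sin α * x 3 + Real.cos α * x 4) =
      x 0 * x 3 + x 1 * x 4 := by
    linear_combination (x 0 * x 3 + x 1 * x 4) * hc
  constructor
  · intro h
    apply hx
    have h0 : Real.cos α * x 0 - Real.sin α * x 1 = 0 := congrArg Prod.fst h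
    have h1 : Real.sin α * x 0 + Real.cos α * x 1 = 0 := congrArg Prod.snd h
    rw [h0, h1] at e0
    have a0 : x 0 = 0 := by nlinarith [sq_nonneg (x 0), sq_nonneg (x 1)]
    have a1 : x 1 = 0 := by nlinarith [sq_nonneg (x 0), sq_nonneg (x 1)]
    rw [a0, a1]
  · change ![Real.sqrt ((Real.cos α * x 0 - Real.sin α * x 1) ^ 2 +
        (Real.sin α * x 0 + Real.cos α * x 1) ^ 2), x 2,
      ((Real.sin α * x 0 + Real.cos α * x 1) * (Real.cos α * x 3 - Real.sin α * x 4) -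
        (Real.cos α * x 0 - Real.sin α * x 1) * (Real.sin α * x 3 + Real.cos α * x 4)) /
        Real.sqrt ((Real.cos α * x 0 - Real.sin α * x 1) ^ 2 +
        (Real.sin α * x 0 + Real.cos α * x 1) ^ 2),
      ((Real.cos α * x 0 - Real.sin α * x 1) * (Real.cos α * x 3 - Real.sin α * x 4) +
        (Real.sin α * x 0 + Real.cos α * x 1) * (Real.sin α * x 3 + Real.cos α * x 4)) /
        Real.sqrt ((Real.cos α * x 0 - Real.sin α * x 1) ^ 2 +
        (Real.sin α * x 0 + Real.cos α * x 1) ^ 2), x 5] = _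
    rw [e0, e1, e2]
    rfl
end
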